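/- arXiv:2511.11618 — 2 statements merged into one kernel-verified Lean document; each statement's English description precedes it below -/
import Mathlib

section
/- Let G be a simple graph on a finite vertex type, let T be an acyclic subgraph of G on the same vertex set such that any two vertices reachable in G are reachable in T (a spanning forest of G), and let e = {u, v} be an edge of G that is not an edge of T. Then G contains a cycle that traverses e and all of whose other edges are edges of T. -/
/-- If `T` is a spanning forest of `G` (acyclic, same reachability as `G`) and
`e = {u, v}` is an edge of `G` not in `T`, then `G` contains a cycle traversing
`e` all of whose other edges are edges of `T`. -/
theorem spanning_forest_fundamental_cycle {V : Type*} [Fintype V]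
    (G T : SimpleGraph V) (hle : T ≤ G) (hac : T.IsAcyclic)
    (hspan : ∀ u v : V, T.Reachable u v ↔ G.Reachable u v)
    (u v : V) (huv : G.Adj u v) (hT : ¬ T.Adj u v) :
    ∃ (a : V) (c : G.Walk a a), c.IsCycle ∧ s(u, v) ∈ c.edges ∧
      ∀ e' ∈ c.edges, e' ≠ s(u, v) → e' ∈ T.edgeSet := by
  obtain ⟨p, hp⟩ := ((hspan v u).2 huv.symm.reachable).exists_isPath
  have hE : (p.mapLe hle).edges = p.edges := by simp
  refine ⟨u, SimpleGraph.Walk.cons huv (p.mapLe hle), ?_, ?_, ?_⟩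
  · rw [SimpleGraph.Walk.cons_isCycle_iff, hE]
    exact ⟨hp.mapLe hle, fun h => hT (p.adj_of_mem_edges h)⟩
  · simp
  · intro e' he' hne
    rw [SimpleGraph.Walk.edges_cons, hE, List.mem_cons] at he'
    exact p.edges_subset_edgeSet (he'.resolve_left hne)
end

section
/- Let Vtx and Fc be finite nonempty types (the vertices and faces of a polygonal mesh mapped onto the unit sphere), let E be a natural number (the number of edges), let k : Fc → ℕ give the number of sides of each face, let α : Fc → Vtx → ℝ give the corner angle of each face at each vertex (zero when the vertex is not a corner of the face), and let A : Fc → ℝ give the spherical area of each face. Assume: (i) the faces tile the sphere, ∑_{f} A f = 4π; (ii) Harriot's formula holds for each face, A f = (∑_{v} α f v) − (k f − 2)·π; (iii) the angles around each vertex sum to a full turn, ∑_{f} α f v = 2π for every vertex v; and (iv) every edge is shared by exactly two faces in the sense that ∑_{f} k f = 2·E. Then Euler's formula holds: (card Vtx : ℝ) − E + card Fc = 2. -/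
open Finset

/-- Euler's formula `V - E + F = 2` for a polygonal mesh mapped onto the unit
sphere, derived from: the faces tiling the sphere, Harriot's formula for the
area of a spherical polygon, the angles around each vertex summing to `2π`,
and every edge being shared by exactly two faces. -/
theorem euler_formula_of_sphere_mesh {Vtx Fc : Type*} [Fintype Vtx]
    [Fintype Fc] [Nonempty Vtx] [Nonempty Fc] (E : ℕ) (k : Fc → ℕ)
    (α : Fc → Vtx → ℝ) (A : Fc → ℝ)
    (htile : ∑ f, A f = 4 * Real.pi)
    (hHarriot : ∀ f, A f = (∑ v, α f v) - ((k f : ℝ) - 2) * Real.pi)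
    (hangles : ∀ v, ∑ f, α f v = 2 * Real.pi)
    (hedges : ∑ f, k f = 2 * E) :
    (Fintype.card Vtx : ℝ) - (E : ℝ) + (Fintype.card Fc : ℝ) = 2 := by
  have hk : ∑ f, (k f : ℝ) = 2 * (E : ℝ) := by exact_mod_cast hedges
  have hsum : ∑ f, ∑ v, α f v = (Fintype.card Vtx : ℝ) * (2 * Real.pi) := by
    rw [Finset.sum_comm, Finset.sum_congr rfl (fun v _ => hangles v)]
    simp
  have h : ∑ f, A f = (Fintype.card Vtx : ℝ) * (2 * Real.pi)
      - (2 * (E : ℝ) - (Fintype.card Fc : ℝ) * 2) * Real.pi := by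
    rw [Finset.sum_congr rfl (fun f _ => hHarriot f), Finset.sum_sub_distrib, hsum,
      ← Finset.sum_mul, Finset.sum_sub_distrib, hk]
    simp
  rw [htile] at h
  have h2 : (2 * Real.pi) * ((Fintype.card Vtx : ℝ) - (E : ℝ) + (Fintype.card Fc : ℝ))
      = (2 * Real.pi) * 2 := by linarith
  exact mul_left_cancel₀ (by positivity) h2
end
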